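/- Let G = C_n be the unweighted cycle graph on n vertices with n odd, n ≥ 3, and let Γ_fec be the family of fractional edge covers of C_n. Then the constant density ρ_0 ≡ 2/n is extremal and Mod_2(Γ_fec) = 4/n. Equivalently, for the family Γ_star of stars of C_n, Mod_2(Γ_star) = n/4. -/

import Mathlib

open Finset

noncomputable section
open scoped Classical

variable {V : Type*}

/-- The set of admissible densities for a family `Γ` of objects on the edge set of `G`.
Densities are elements of `ℝ^E_{≥0}`, modeled as nonnegative functions on `Sym2 V`
vanishing outside the edge set of `G`. `ρ` is admissible if `ℓ_ρ(γ) ≥ 1` for all `γ ∈ Γ`. -/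
def Adm [Fintype V] [DecidableEq V] (G : SimpleGraph V) (Γ : Set (Sym2 V → ℝ)) :
    Set (Sym2 V → ℝ) :=
  {ρ | (∀ e, 0 ≤ ρ e) ∧ (∀ e ∉ G.edgeSet, ρ e = 0) ∧
    ∀ γ ∈ Γ, 1 ≤ ∑ e ∈ G.edgeFinset, γ e * ρ e}

/-- The `p`-energy of a density `ρ` with edge weights `σ`: `Σ_e σ(e) ρ(e)^p`. -/
def energy [Fintype V] [DecidableEq V] (p : ℝ) (σ : Sym2 V → ℝ) (G : SimpleGraph V)
    (ρ : Sym2 V → ℝ) : ℝ :=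
  ∑ e ∈ G.edgeFinset, σ e * ρ e ^ p

/-- The `p`-modulus of a family `Γ` with edge weights `σ`:
the infimum of the `p`-energy over admissible densities. -/
def Modulus [Fintype V] [DecidableEq V] (p : ℝ) (σ : Sym2 V → ℝ) (G : SimpleGraph V)
    (Γ : Set (Sym2 V → ℝ)) : ℝ :=
  sInf (energy p σ G '' Adm G Γ)

/-- The unweighted 2-energy `Σ_e ρ(e)²`. -/
def energy2 [Fintype V] [DecidableEq V] (G : SimpleGraph V) (ρ : Sym2 V → ℝ) : ℝ :=
  ∑ e ∈ G.edgeFinset, ρ e ^ 2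

/-- The unweighted 2-modulus. -/
def Mod2 [Fintype V] [DecidableEq V] (G : SimpleGraph V) (Γ : Set (Sym2 V → ℝ)) : ℝ :=
  sInf (energy2 G '' Adm G Γ)

/-- `C` is an edge cover of `G`: a set of edges of `G` meeting every vertex. -/
def IsEdgeCover [Fintype V] [DecidableEq V] (G : SimpleGraph V) (C : Finset (Sym2 V)) : Prop :=
  ↑C ⊆ G.edgeSet ∧ ∀ v : V, ∃ e ∈ C, v ∈ e

/-- The family `Γ_ec` of indicator vectors of edge covers of `G`. -/
def Γec [Fintype V] [DecidableEq V] (G : SimpleGraph V) : Set (Sym2 V → ℝ) :=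
  {γ | ∃ C : Finset (Sym2 V), IsEdgeCover G C ∧ γ = fun e => if e ∈ C then 1 else 0}

/-- The family `Γ_fec` of fractional edge covers of `G`: nonnegative vectors on the edge
set with `Σ_{e ∈ δ(v)} γ(e) ≥ 1` at every vertex `v`. -/
def Γfec [Fintype V] [DecidableEq V] (G : SimpleGraph V) : Set (Sym2 V → ℝ) :=
  {γ | (∀ e, 0 ≤ γ e) ∧ (∀ e ∉ G.edgeSet, γ e = 0) ∧
    ∀ v : V, 1 ≤ ∑ e ∈ G.incidenceFinset v, γ e}

/-- The family `Γ_star` of indicator vectors of the stars `δ(v)`, `v ∈ V`. -/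
def Γstar [Fintype V] [DecidableEq V] (G : SimpleGraph V) : Set (Sym2 V → ℝ) :=
  {γ | ∃ v : V, γ = fun e => if e ∈ G.incidenceFinset v then 1 else 0}

/-- The subgraph of `G` whose edge set is the support `{e : γ(e) > 0}` of `γ`. -/
def suppGraph (G : SimpleGraph V) (γ : Sym2 V → ℝ) : SimpleGraph V where
  Adj u v := G.Adj u v ∧ 0 < γ s(u, v)
  symm := by
    constructor
    intro u v h
    refine ⟨h.1.symm, ?_⟩
    rw [Sym2.eq_swap]
    exact h.2
  loopless := ⟨fun v h => G.loopless.irrefl v h.1⟩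

open SimpleGraph

theorem double_count [Fintype V] [DecidableEq V] (G : SimpleGraph V) (f : Sym2 V → ℝ) :
    ∑ v : V, ∑ e ∈ G.incidenceFinset v, f e = 2 * ∑ e ∈ G.edgeFinset, f e := by
  have h1 : ∀ v : V, ∑ e ∈ G.incidenceFinset v, f e
      = ∑ e ∈ G.edgeFinset, if v ∈ e then f e else 0 := by
    intro v
    rw [← Finset.sum_filter]
    apply Finset.sum_congr _ (fun _ _ => rfl)
    ext e
    simp [SimpleGraph.mem_incidenceFinset, SimpleGraph.incidenceSet]
  simp_rw [h1]
  rw [Finset.sum_comm, Finset.mul_sum]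
  apply Finset.sum_congr rfl
  intro e he
  rw [SimpleGraph.mem_edgeFinset] at he
  induction e using Sym2.ind with
  | _ a b =>
    have hab : a ≠ b := G.ne_of_adj he
    rw [← Finset.sum_filter, Finset.sum_const]
    have : (Finset.univ.filter fun v => v ∈ s(a, b)) = {a, b} := by
      ext v; simp
    rw [this, Finset.card_pair hab]
    simp

theorem two_regular_mod [Fintype V] [DecidableEq V] (G : SimpleGraph V) (n : ℕ) (hn : 0 < n)
    (hc : Fintype.card V = n) (hd : ∀ v, (G.incidenceFinset v).card = 2) :
    (fun e => if e ∈ G.edgeSet then 2 / (n : ℝ) else 0) ∈ Adm G (Γfec G) ∧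
    energy2 G (fun e => if e ∈ G.edgeSet then 2 / (n : ℝ) else 0) = 4 / (n : ℝ) ∧
    Mod2 G (Γfec G) = 4 / (n : ℝ) ∧
    Mod2 G (Γstar G) = (n : ℝ) / 4 := by
  have hn' : (0 : ℝ) < n := by exact_mod_cast hn
  have hE : (G.edgeFinset.card : ℝ) = n := by
    have := double_count G (fun _ => 1)
    simp [hd, hc] at this
    rw [mul_comm] at this
    simpa using this.symm
  have hconst : ∀ (c : ℝ) (g : Sym2 V → ℝ), ∑ e ∈ G.edgeFinset, g e *
      (if e ∈ G.edgeSet then c else 0) = (∑ e ∈ G.edgeFinset, g e) * c := by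
    intro c g
    rw [Finset.sum_mul]
    apply Finset.sum_congr rfl
    intro e he
    rw [SimpleGraph.mem_edgeFinset] at he
    simp [he]
  have hen : ∀ c : ℝ, energy2 G (fun e => if e ∈ G.edgeSet then c else 0) = n * c ^ 2 := by
    intro c
    unfold energy2
    rw [← hE, ← nsmul_eq_mul, ← Finset.sum_const]
    apply Finset.sum_congr rfl
    intro e he
    rw [SimpleGraph.mem_edgeFinset] at he
    simp [he]
  have hinc : ∀ v e, e ∈ G.incidenceFinset v → e ∈ G.edgeSet := by
    intro v e he
    rw [SimpleGraph.mem_incidenceFinset] at he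
    exact he.1
  have hCS : ∀ ρ : Sym2 V → ℝ, (∑ e ∈ G.edgeFinset, ρ e) ^ 2 ≤ n * energy2 G ρ := by
    intro ρ
    rw [← hE]
    exact sq_sum_le_card_mul_sum_sq
  have hstar : ∀ (v : V) (ρ : Sym2 V → ℝ), ∑ e ∈ G.edgeFinset,
      (if e ∈ G.incidenceFinset v then (1 : ℝ) else 0) * ρ e
      = ∑ e ∈ G.incidenceFinset v, ρ e := by
    intro v ρ
    simp only [ite_mul, one_mul, zero_mul]
    rw [← Finset.sum_filter]
    apply Finset.sum_congr _ (fun _ _ => rfl)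
    ext e
    simp only [Finset.mem_filter, SimpleGraph.mem_edgeFinset]
    exact ⟨fun h => h.2, fun h => ⟨hinc v e h, h⟩⟩
  have hadm : (fun e => if e ∈ G.edgeSet then 2 / (n : ℝ) else 0) ∈ Adm G (Γfec G) := by
    refine ⟨fun e => ?_, fun e he => if_neg he, fun γ hγ => ?_⟩
    · dsimp only
      split_ifs <;> positivity
    · rw [hconst]
      have h1 := double_count G γ
      have h2 : ∑ v : V, (1 : ℝ) ≤ ∑ v : V, ∑ e ∈ G.incidenceFinset v, γ e :=
        Finset.sum_le_sum fun v _ => hγ.2.2 v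
      rw [h1] at h2
      simp [hc] at h2
      rw [mul_div_assoc', le_div_iff₀ hn']
      linarith
  have hadm2 : (fun e => if e ∈ G.edgeSet then 1 / 2 else 0) ∈ Adm G (Γstar G) := by
    refine ⟨fun e => ?_, fun e he => if_neg he, ?_⟩
    · dsimp only
      split_ifs <;> positivity
    · rintro γ ⟨v, rfl⟩
      rw [hstar, Finset.sum_congr rfl (fun e he => if_pos (hinc v e he)), Finset.sum_const, hd]
      norm_num
  have hen1 : energy2 G (fun e => if e ∈ G.edgeSet then 2 / (n : ℝ) else 0) = 4 / (n : ℝ) := by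
    rw [hen]; field_simp; norm_num
  refine ⟨hadm, hen1, ?_, ?_⟩
  · refine IsLeast.csInf_eq ⟨⟨_, hadm, hen1⟩, ?_⟩
    rintro _ ⟨ρ, hρ, rfl⟩
    have h := hρ.2.2 (fun e => if e ∈ G.edgeSet then 1 / 2 else 0) (by
      refine ⟨fun e => ?_, fun e he => if_neg he, fun v => ?_⟩
      · dsimp only
        split_ifs <;> positivity
      · rw [Finset.sum_congr rfl (fun e he => if_pos (hinc v e he)), Finset.sum_const, hd]
        norm_num)
    simp_rw [mul_comm _ (ρ _)] at h
    rw [hconst] at h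
    have := hCS ρ
    rw [div_le_iff₀ hn']
    nlinarith
  · refine IsLeast.csInf_eq ⟨⟨_, hadm2, by rw [hen]; ring⟩, ?_⟩
    rintro _ ⟨ρ, hρ, rfl⟩
    have h2 : ∑ v : V, (1 : ℝ) ≤ ∑ v : V, ∑ e ∈ G.incidenceFinset v, ρ e := by
      apply Finset.sum_le_sum
      intro v _
      have := hρ.2.2 _ ⟨v, rfl⟩
      rwa [hstar] at this
    rw [double_count] at h2
    simp [hc] at h2
    have h3 := hCS ρ
    have h4 : (n : ℝ) ^ 2 ≤ (2 * ∑ e ∈ G.edgeFinset, ρ e) ^ 2 :=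
      pow_le_pow_left₀ hn'.le h2 2
    have h5 : (n : ℝ) * n ≤ n * (4 * energy2 G ρ) := by nlinarith
    have := le_of_mul_le_mul_left h5 hn'
    linarith

/-- For the cycle graph `C_n` with `n` odd, `n ≥ 3`: the constant density `ρ₀ ≡ 2/n` is
extremal for `Mod_2(Γ_fec)`, `Mod_2(Γ_fec) = 4/n`, and `Mod_2(Γ_star) = n/4`. -/
theorem mod2_cycleGraph_odd (n : ℕ) (hn : 3 ≤ n) (hodd : Odd n) :
    (fun e => if e ∈ (cycleGraph n).edgeFinset then 2 / (n : ℝ) else 0)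
      ∈ Adm (cycleGraph n) (Γfec (cycleGraph n)) ∧
    energy2 (cycleGraph n) (fun e => if e ∈ (cycleGraph n).edgeFinset then 2 / (n : ℝ) else 0)
      = Mod2 (cycleGraph n) (Γfec (cycleGraph n)) ∧
    Mod2 (cycleGraph n) (Γfec (cycleGraph n)) = 4 / (n : ℝ) ∧
    Mod2 (cycleGraph n) (Γstar (cycleGraph n)) = (n : ℝ) / 4 := by
  have hd : ∀ v, ((cycleGraph n).incidenceFinset v).card = 2 := by
    intro v
    rw [SimpleGraph.card_incidenceFinset_eq_degree]
    obtain ⟨m, rfl⟩ : ∃ m, n = m + 3 := ⟨n - 3, by omega⟩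
    convert SimpleGraph.cycleGraph_degree_three_le (v := v)
  have hf : (fun e => if e ∈ (cycleGraph n).edgeFinset then 2 / (n : ℝ) else 0)
      = (fun e => if e ∈ (cycleGraph n).edgeSet then 2 / (n : ℝ) else 0) := by
    funext e
    simp only [SimpleGraph.mem_edgeFinset]
  obtain ⟨h1, h2, h3, h4⟩ := two_regular_mod (cycleGraph n) n (by omega) (by simp)
    (by intro v; convert hd v)
  rw [hf]
  refine ⟨?_, ?_, ?_, ?_⟩
  · convert h1
  · refine Eq.trans ?_ (h2.trans h3.symm) <;> congr!
  · convert h3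
  · convert h4
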